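/- arXiv:2511.03708 — 2 statements merged into one kernel-verified Lean document; each statement's English description precedes it below -/
import Mathlib

section
/- Let M ≥ 2 be an integer. The function ψ_M has a unique minimizer u* = (u*_1,…,u*_{M−1}) over U_M. Moreover, setting u*_0 = 0 and u*_M = 1, the vector (u*_0, u*_1, …, u*_M) solves the optimality system, and it is the unique solution: if (u_0, u_1, …, u_M) solves the optimality system, then u_i = u*_i for every 0 ≤ i ≤ M. -/
noncomputable def gammaMin (d : ℕ) (β : ℝ) : ℝ := β / (2 * β + d)

noncomputable def gammaMax (d : ℕ) (β : ℝ) : ℝ := (β + d) / (2 * β + d)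

noncomputable def Sset (d : ℕ) (β : ℝ) : Set ℝ := Set.Icc (gammaMin d β) (gammaMax d β)

noncomputable def hFun (M : ℕ) (γ : ℝ) : ℝ := (1 - γ) / (1 - γ ^ M)

/-- η_1(u,γ) = u_1, η_i(u,γ) = u_i − γ·u_{i−1} for 2 ≤ i ≤ M−1, η_M(u,γ) = 1 − γ·u_{M−1}. -/
noncomputable def etaFun (M : ℕ) (u : ℕ → ℝ) (γ : ℝ) (i : ℕ) : ℝ :=
  if i = 1 then u 1 else if i = M then 1 - γ * u (M - 1) else u i - γ * u (i - 1)

/-- Ψ_M(u,γ) = max_{1≤i≤M} η_i(u,γ) − h_M(γ). -/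
noncomputable def PsiFun (M : ℕ) (u : ℕ → ℝ) (γ : ℝ) : ℝ :=
  (⨆ i : Set.Icc 1 M, etaFun M u γ i.1) - hFun M γ

/-- ψ_M(u) = max( u_1, sup_{γ∈𝒮} Ψ_M(u,γ) ). -/
noncomputable def psiFun (d : ℕ) (β : ℝ) (M : ℕ) (u : ℕ → ℝ) : ℝ :=
  max (u 1) (⨆ γ : Sset d β, PsiFun M u γ.1)

/-- U_M = { u : 0 ≤ u_1 ≤ u_2 ≤ ⋯ ≤ u_{M−1} ≤ 1 } (only coordinates 1,…,M−1 matter). -/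
def UM (M : ℕ) : Set (ℕ → ℝ) :=
  {u | 0 ≤ u 1 ∧ u (M - 1) ≤ 1 ∧ ∀ i, 1 ≤ i → i + 1 ≤ M - 1 → u i ≤ u (i + 1)}

/-- ψ*_M = inf_{u ∈ U_M} ψ_M(u). -/
noncomputable def psiStar (d : ℕ) (β : ℝ) (M : ℕ) : ℝ :=
  sInf (psiFun d β M '' UM M)

/-- φ_M(x) = min_{γ∈𝒮} (γ·x + h_M(γ)). -/
noncomputable def phiFun (d : ℕ) (β : ℝ) (M : ℕ) (x : ℝ) : ℝ :=
  sInf ((fun γ => γ * x + hFun M γ) '' Sset d β)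

/-- (u_0, …, u_M) solves the optimality system: u_0 = 0, u_M = 1,
0 < u_1 < ⋯ < u_{M−1} < 1, and u_i = u_1 + φ_M(u_{i−1}) for 2 ≤ i ≤ M. -/
def SolvesOptSystem (d : ℕ) (β : ℝ) (M : ℕ) (u : ℕ → ℝ) : Prop :=
  u 0 = 0 ∧ u M = 1 ∧ 0 < u 1 ∧ u (M - 1) < 1 ∧
  (∀ i, 1 ≤ i → i + 1 ≤ M - 1 → u i < u (i + 1)) ∧
  ∀ i, 2 ≤ i → i ≤ M → u i = u 1 + phiFun d β M (u (i - 1))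

/-!
For fixed `γ`, the inequality `Ψ_M(u, γ) ≤ t` says `u_1 ≤ t + h_M(γ)` and
`u_{i+1} - γ u_i ≤ t + h_M(γ)` for `1 ≤ i < M`, where `u_M = 1`. Together with the branch `u_1` of
`ψ_M`, minimising over `γ` turns `ψ_M(u) ≤ t` into `u_1 ≤ t`, `u_{i+1} ≤ t + φ_M(u_i)`. As `φ_M` is
strictly increasing, any such `u` lies below the sequence obtained by replacing the inequalities
with equalities, so `ψ_M(u) ≤ t` forces the `M`-th term of that shooting sequence to be at least
`1`. This term is continuous and strictly increasing in `t`, and it is less than `1` at `t = 0`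
because `h_M(γ) = 1 / (1 + γ + ⋯ + γ^(M-1))`; hence it equals `1` for exactly one `t > 0`, which is
the minimum of `ψ_M`. At this `t` a strict inequality anywhere would propagate up to index `M`,
where both sequences equal `1`; so the shooting sequence is the only minimizer.
-/

open Set Function

section LowerEnvelope

/-- The lower envelope `x ↦ min_{γ ∈ S} (γ x + h γ)` of a family of affine functions indexed by
their slopes; `phiFun d β M` unfolds to the case `S = Sset d β`, `h = hFun M`. It is encoded as an
infimum, which is attained when `S` is compact and nonempty and `h` is continuous on `S`. -/
noncomputable def lowerEnvelope (S : Set ℝ) (h : ℝ → ℝ) (x : ℝ) : ℝ :=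
  sInf ((fun γ => γ * x + h γ) '' S)

variable {S : Set ℝ} {h : ℝ → ℝ}

lemma isLeast_lowerEnvelope (hS : IsCompact S) (hne : S.Nonempty) (hh : ContinuousOn h S) (x : ℝ) :
    IsLeast ((fun γ => γ * x + h γ) '' S) (lowerEnvelope S h x) :=
  (hS.image_of_continuousOn (by fun_prop)).isLeast_sInf (hne.image _)

lemma exists_eq_lowerEnvelope (hS : IsCompact S) (hne : S.Nonempty) (hh : ContinuousOn h S)
    (x : ℝ) : ∃ γ ∈ S, γ * x + h γ = lowerEnvelope S h x :=
  (isLeast_lowerEnvelope hS hne hh x).1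

lemma le_lowerEnvelope_iff (hS : IsCompact S) (hne : S.Nonempty) (hh : ContinuousOn h S)
    {c x : ℝ} : c ≤ lowerEnvelope S h x ↔ ∀ γ ∈ S, c ≤ γ * x + h γ :=
  (le_isGLB_iff (isLeast_lowerEnvelope hS hne hh x).isGLB).trans forall_mem_image

lemma lowerEnvelope_le (hS : IsCompact S) (hh : ContinuousOn h S) {γ : ℝ} (hγ : γ ∈ S) (x : ℝ) :
    lowerEnvelope S h x ≤ γ * x + h γ :=
  (le_lowerEnvelope_iff hS ⟨γ, hγ⟩ hh).1 le_rfl γ hγ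

lemma strictMono_lowerEnvelope (hS : IsCompact S) (hne : S.Nonempty) (hh : ContinuousOn h S)
    (hpos : ∀ γ ∈ S, 0 < γ) : StrictMono (lowerEnvelope S h) := by
  intro x y hxy
  obtain ⟨γ, hγ, hy⟩ := exists_eq_lowerEnvelope hS hne hh y
  calc lowerEnvelope S h x ≤ γ * x + h γ := lowerEnvelope_le hS hh hγ x
    _ < γ * y + h γ := by gcongr; exact hpos γ hγ
    _ = lowerEnvelope S h y := hy

lemma continuous_lowerEnvelope (hS : IsCompact S) (hne : S.Nonempty) (hh : ContinuousOn h S) :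
    Continuous (lowerEnvelope S h) := by
  obtain ⟨K, hK⟩ := hS.isBounded.exists_norm_le
  refine (LipschitzWith.of_le_add_mul' K fun x y => ?_).continuous
  obtain ⟨γ, hγ, hy⟩ := exists_eq_lowerEnvelope hS hne hh y
  have hslope : γ * (x - y) ≤ K * dist x y := calc
    γ * (x - y) ≤ |γ| * |x - y| := (le_abs_self _).trans_eq (abs_mul _ _)
    _ ≤ K * dist x y := mul_le_mul_of_nonneg_right (hK γ hγ) (abs_nonneg _)
  calc lowerEnvelope S h x ≤ γ * x + h γ := lowerEnvelope_le hS hh hγ x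
    _ = lowerEnvelope S h y + γ * (x - y) := by rw [← hy]; ring
    _ ≤ lowerEnvelope S h y + K * dist x y := by gcongr

end LowerEnvelope

section Shooting

/-- The shooting sequence `0, t, t + φ(t), t + φ(t + φ(t)), …`: the solution of the recursion
`u_{i+1} = u_1 + φ(u_i)`, `i ≥ 1`, with parameter `u_1 = t`. The recursion does not apply at
`i = 0`, where the value `0` is the convention `u_0 = 0` of the optimality system. -/
def shoot (φ : ℝ → ℝ) (t : ℝ) : ℕ → ℝ
  | 0 => 0
  | 1 => t
  | n + 2 => t + φ (shoot φ t (n + 1))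

/-- A subsolution, up to index `M`, of the recursion defining `shoot φ t`. Only the terms
`w 1, …, w M` are constrained. -/
def IsSubsolution (φ : ℝ → ℝ) (t : ℝ) (M : ℕ) (w : ℕ → ℝ) : Prop :=
  w 1 ≤ t ∧ ∀ i, 1 ≤ i → i < M → w (i + 1) ≤ t + φ (w i)

variable {φ : ℝ → ℝ} {t : ℝ} {M : ℕ} {w : ℕ → ℝ}

lemma shoot_succ (φ : ℝ → ℝ) (t : ℝ) {n : ℕ} (hn : 1 ≤ n) :
    shoot φ t (n + 1) = t + φ (shoot φ t n) := by
  obtain ⟨k, rfl⟩ := Nat.exists_eq_add_of_le' hn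
  rfl

lemma isSubsolution_shoot (φ : ℝ → ℝ) (t : ℝ) (M : ℕ) : IsSubsolution φ t M (shoot φ t) :=
  ⟨le_rfl, fun _ hi _ => (shoot_succ φ t hi).le⟩

lemma continuous_shoot (hφ : Continuous φ) (n : ℕ) : Continuous fun t => shoot φ t n := by
  induction n using Nat.twoStepInduction with
  | zero => exact continuous_const
  | one => exact continuous_id
  | more n _ ih => exact continuous_id.add (hφ.comp ih)

lemma strictMono_shoot_left (hφ : Monotone φ) {n : ℕ} (hn : 1 ≤ n) :
    StrictMono fun t => shoot φ t n := by
  induction n, hn using Nat.le_induction with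
  | base => exact strictMono_id
  | succ n hn ih =>
    simp only [shoot_succ φ _ hn]
    exact strictMono_id.add_monotone (hφ.comp ih.monotone)

lemma strictMono_shoot (hφ : StrictMono φ) (hφ0 : 0 ≤ φ 0) (ht : 0 < t) :
    StrictMono (shoot φ t) := by
  refine strictMono_nat_of_lt_succ fun n => ?_
  induction n using Nat.twoStepInduction with
  | zero => exact ht
  | one => exact lt_add_of_pos_right t (hφ0.trans_lt (hφ ht))
  | more n _ ih => exact add_lt_add_right (hφ ih) t

lemma shoot_zero_succ_le_geom_sum {g c : ℝ} (hg : 0 ≤ g) (hφ : ∀ x, φ x ≤ g * x + c) (n : ℕ) :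
    shoot φ 0 (n + 1) ≤ c * ∑ i ∈ Finset.range n, g ^ i := by
  induction n with
  | zero => simp [shoot]
  | succ n ih =>
    calc shoot φ 0 (n + 2) = φ (shoot φ 0 (n + 1)) := zero_add _
      _ ≤ g * shoot φ 0 (n + 1) + c := hφ _
      _ ≤ g * (c * ∑ i ∈ Finset.range n, g ^ i) + c := by gcongr
      _ = c * ∑ i ∈ Finset.range (n + 1), g ^ i := by rw [geom_sum_succ]; ring

lemma exists_shoot_eq {c : ℝ} (hφ : StrictMono φ) (hφc : Continuous φ) (hφ0 : 0 ≤ φ 0)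
    (hM : 1 ≤ M) (hc : 0 < c) (h0 : shoot φ 0 M < c) : ∃ t, 0 < t ∧ shoot φ t M = c := by
  have hcM : c ≤ shoot φ c M := (strictMono_shoot hφ hφ0 hc).monotone hM
  obtain ⟨t, ht, hts⟩ :=
    intermediate_value_Ioc hc.le (continuous_shoot hφc M).continuousOn ⟨h0, hcM⟩
  exact ⟨t, ht.1, hts⟩

lemma eq_shoot_of_recursion (h0 : w 0 = 0) (hw : ∀ i, 1 ≤ i → i < M → w (i + 1) = w 1 + φ (w i))
    {i : ℕ} (hi : i ≤ M) : w i = shoot φ (w 1) i := by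
  induction i using Nat.twoStepInduction with
  | zero => exact h0
  | one => rfl
  | more n _ ih => rw [hw (n + 1) (by lia) (by lia), ih (by lia), shoot]

lemma IsSubsolution.le_shoot (hw : IsSubsolution φ t M w) (hφ : Monotone φ) {i : ℕ} (hi : 1 ≤ i)
    (hiM : i ≤ M) : w i ≤ shoot φ t i := by
  induction i, hi using Nat.le_induction with
  | base => exact hw.1
  | succ i hi ih =>
    calc w (i + 1) ≤ t + φ (w i) := hw.2 i hi hiM
      _ ≤ t + φ (shoot φ t i) := by gcongr; exact hφ (ih (by lia))
      _ = shoot φ t (i + 1) := (shoot_succ φ t hi).symm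

lemma IsSubsolution.lt_shoot_of_lt (hw : IsSubsolution φ t M w) (hφ : StrictMono φ) {i j : ℕ}
    (hi : 1 ≤ i) (hij : i ≤ j) (hj : j ≤ M) (hlt : w i < shoot φ t i) : w j < shoot φ t j := by
  induction j, hij using Nat.le_induction with
  | base => exact hlt
  | succ j hij ih =>
    calc w (j + 1) ≤ t + φ (w j) := hw.2 j (by lia) hj
      _ < t + φ (shoot φ t j) := by gcongr; exact hφ (ih (by lia))
      _ = shoot φ t (j + 1) := (shoot_succ φ t (by lia)).symm

lemma IsSubsolution.eq_shoot (hw : IsSubsolution φ t M w) (hφ : StrictMono φ)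
    (hwM : w M = shoot φ t M) {i : ℕ} (hi : 1 ≤ i) (hiM : i ≤ M) : w i = shoot φ t i :=
  (hw.le_shoot hφ.monotone hi hiM).eq_of_not_lt fun hlt =>
    (hw.lt_shoot_of_lt hφ hi hiM le_rfl hlt).ne hwM

end Shooting

section HFun

variable {M : ℕ} {γ : ℝ}

lemma hFun_eq_inv_geom_sum (M : ℕ) (hγ : γ ≠ 1) : hFun M γ = (∑ i ∈ Finset.range M, γ ^ i)⁻¹ := by
  rw [hFun, ← mul_neg_geom_sum, div_mul_cancel_left₀ (sub_ne_zero.2 hγ.symm)]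

lemma hFun_pos (hM : M ≠ 0) (hγ : γ ∈ Ioo 0 1) : 0 < hFun M γ := by
  rw [hFun_eq_inv_geom_sum M hγ.2.ne]
  exact inv_pos.2 (geom_sum_pos hγ.1.le hM)

lemma continuousOn_hFun (hM : M ≠ 0) : ContinuousOn (hFun M) (Ioo 0 1) := by
  refine ContinuousOn.div (by fun_prop) (by fun_prop) fun γ hγ => ?_
  exact (sub_pos.2 (pow_lt_one₀ hγ.1.le hγ.2 hM)).ne'

lemma hFun_mul_geom_sum_pred_lt_one (hM : M ≠ 0) (hγ : γ ∈ Ioo 0 1) :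
    hFun M γ * ∑ i ∈ Finset.range (M - 1), γ ^ i < 1 := by
  have hsum : ∑ i ∈ Finset.range (M - 1), γ ^ i < ∑ i ∈ Finset.range M, γ ^ i := by
    rw [← Nat.sub_one_add_one hM, Finset.sum_range_succ, Nat.add_sub_cancel]
    exact lt_add_of_pos_right _ (pow_pos hγ.1 _)
  rw [hFun_eq_inv_geom_sum M hγ.2.ne]
  exact (inv_mul_lt_one₀ (geom_sum_pos hγ.1.le hM)).2 hsum

end HFun

section SlopeSet

variable {β : ℝ}

lemma Sset_subset_Ioo (d : ℕ) (hβ : 0 < β) : Sset d β ⊆ Ioo 0 1 := by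
  refine Icc_subset_Ioo ?_ ?_
  · rw [gammaMin]
    positivity
  · rw [gammaMax, div_lt_one (by positivity)]
    linarith

lemma Sset_nonempty (d : ℕ) (hβ : 0 < β) : (Sset d β).Nonempty := by
  rw [Sset, nonempty_Icc, gammaMin, gammaMax]
  gcongr
  exact le_add_of_nonneg_right d.cast_nonneg

end SlopeSet

section Phi

variable {β : ℝ} {M : ℕ}

lemma continuousOn_hFun_Sset (d : ℕ) (hβ : 0 < β) (hM : M ≠ 0) :
    ContinuousOn (hFun M) (Sset d β) :=
  (continuousOn_hFun hM).mono (Sset_subset_Ioo d hβ)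

lemma le_phiFun_iff (d : ℕ) (hβ : 0 < β) (hM : M ≠ 0) {c x : ℝ} :
    c ≤ phiFun d β M x ↔ ∀ γ ∈ Sset d β, c ≤ γ * x + hFun M γ :=
  le_lowerEnvelope_iff isCompact_Icc (Sset_nonempty d hβ) (continuousOn_hFun_Sset d hβ hM)

lemma strictMono_phiFun (d : ℕ) (hβ : 0 < β) (hM : M ≠ 0) : StrictMono (phiFun d β M) :=
  strictMono_lowerEnvelope isCompact_Icc (Sset_nonempty d hβ) (continuousOn_hFun_Sset d hβ hM)
    fun _ hγ => (Sset_subset_Ioo d hβ hγ).1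

lemma continuous_phiFun (d : ℕ) (hβ : 0 < β) (hM : M ≠ 0) : Continuous (phiFun d β M) :=
  continuous_lowerEnvelope isCompact_Icc (Sset_nonempty d hβ) (continuousOn_hFun_Sset d hβ hM)

lemma phiFun_zero_nonneg (d : ℕ) (hβ : 0 < β) (hM : M ≠ 0) : 0 ≤ phiFun d β M 0 := by
  refine (le_phiFun_iff d hβ hM).2 fun γ hγ => ?_
  rw [mul_zero, zero_add]
  exact (hFun_pos hM (Sset_subset_Ioo d hβ hγ)).le

lemma shoot_phiFun_zero_lt_one (d : ℕ) (hβ : 0 < β) (hM : M ≠ 0) :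
    shoot (phiFun d β M) 0 M < 1 := by
  obtain ⟨γ, hγS⟩ := Sset_nonempty d hβ
  have hγ := Sset_subset_Ioo d hβ hγS
  have hφ : ∀ x, phiFun d β M x ≤ γ * x + hFun M γ := fun x =>
    (le_phiFun_iff d hβ hM).1 le_rfl γ hγS
  calc shoot (phiFun d β M) 0 M = shoot (phiFun d β M) 0 (M - 1 + 1) := by
        rw [Nat.sub_one_add_one hM]
    _ ≤ hFun M γ * ∑ i ∈ Finset.range (M - 1), γ ^ i :=
        shoot_zero_succ_le_geom_sum hγ.1.le hφ (M - 1)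
    _ < 1 := hFun_mul_geom_sum_pred_lt_one hM hγ

lemma exists_shoot_phiFun_eq_one (d : ℕ) (hβ : 0 < β) (hM : M ≠ 0) :
    ∃ t, 0 < t ∧ shoot (phiFun d β M) t M = 1 :=
  exists_shoot_eq (strictMono_phiFun d hβ hM) (continuous_phiFun d hβ hM)
    (phiFun_zero_nonneg d hβ hM) (Nat.one_le_iff_ne_zero.2 hM) one_pos
    (shoot_phiFun_zero_lt_one d hβ hM)

end Phi

section Psi

variable {β t : ℝ} {M : ℕ} {u : ℕ → ℝ}

-- Updating `u` to `1` at `M` absorbs the separate formula for `η_M` into that for `η_i`, `i < M`.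
lemma etaFun_succ (u : ℕ → ℝ) (γ : ℝ) {i : ℕ} (hi : 1 ≤ i) (hiM : i < M) :
    etaFun M u γ (i + 1) = update u M 1 (i + 1) - γ * update u M 1 i := by
  rw [etaFun, if_neg (by lia), update_of_ne hiM.ne]
  split_ifs with h
  · rw [← h, update_self, Nat.add_sub_cancel]
  · rw [update_of_ne h, Nat.add_sub_cancel]

lemma continuous_etaFun (M : ℕ) (u : ℕ → ℝ) (i : ℕ) : Continuous fun γ => etaFun M u γ i := by
  unfold etaFun
  split_ifs <;> fun_prop

lemma PsiFun_le_iff_etaFun (hM : M ≠ 0) {γ : ℝ} :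
    PsiFun M u γ ≤ t ↔ ∀ i ∈ Icc 1 M, etaFun M u γ i ≤ t + hFun M γ := by
  have : Nonempty (Icc 1 M) := ⟨⟨1, le_rfl, Nat.one_le_iff_ne_zero.2 hM⟩⟩
  rw [PsiFun, sub_le_iff_le_add, ciSup_le_iff (finite_range _).bddAbove]
  exact Subtype.forall

lemma PsiFun_le_iff (hM : M ≠ 0) {γ : ℝ} :
    PsiFun M u γ ≤ t ↔ u 1 ≤ t + hFun M γ ∧
      ∀ i, 1 ≤ i → i < M → update u M 1 (i + 1) - γ * update u M 1 i ≤ t + hFun M γ := by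
  rw [PsiFun_le_iff_etaFun hM]
  constructor
  · refine fun h => ⟨h 1 ⟨le_rfl, Nat.one_le_iff_ne_zero.2 hM⟩, fun i hi hiM => ?_⟩
    rw [← etaFun_succ u γ hi hiM]
    exact h (i + 1) ⟨by lia, hiM⟩
  · rintro ⟨h1, h⟩ (_ | _ | i) ⟨hi, hiM⟩
    · exact absurd hi (by lia)
    · exact h1
    · rw [etaFun_succ u γ (by lia) hiM]
      exact h (i + 1) (by lia) hiM

lemma bddAbove_range_PsiFun (d : ℕ) (hβ : 0 < β) (hM : M ≠ 0) (u : ℕ → ℝ) :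
    BddAbove (range fun γ : Sset d β => PsiFun M u γ) := by
  have heta : BddAbove (⋃ i ∈ Icc 1 M, (fun γ => etaFun M u γ i) '' Sset d β) :=
    (finite_Icc 1 M).bddAbove_biUnion.2 fun i _ =>
      isCompact_Icc.bddAbove_image (continuous_etaFun M u i).continuousOn
  obtain ⟨C, hC⟩ := heta
  refine ⟨C, forall_mem_range.2 fun ⟨γ, hγ⟩ => (PsiFun_le_iff_etaFun hM).2 fun i hi => ?_⟩
  calc etaFun M u γ i ≤ C := hC (mem_biUnion hi (mem_image_of_mem _ hγ))
    _ ≤ C + hFun M γ := le_add_of_nonneg_right (hFun_pos hM (Sset_subset_Ioo d hβ hγ)).le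

lemma psiFun_le_iff_PsiFun (d : ℕ) (hβ : 0 < β) (hM : M ≠ 0) :
    psiFun d β M u ≤ t ↔ u 1 ≤ t ∧ ∀ γ ∈ Sset d β, PsiFun M u γ ≤ t := by
  have : Nonempty (Sset d β) := (Sset_nonempty d hβ).to_subtype
  rw [psiFun, max_le_iff, ciSup_le_iff (bddAbove_range_PsiFun d hβ hM u)]
  exact and_congr_right' Subtype.forall

lemma psiFun_le_iff_isSubsolution (d : ℕ) (hβ : 0 < β) (hM : 2 ≤ M) :
    psiFun d β M u ≤ t ↔ IsSubsolution (phiFun d β M) t M (update u M 1) := by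
  have hM0 : M ≠ 0 := by lia
  simp only [psiFun_le_iff_PsiFun d hβ hM0, PsiFun_le_iff hM0, IsSubsolution,
    ← sub_le_iff_le_add', le_phiFun_iff d hβ hM0, update_of_ne (show 1 ≠ M by lia)]
  constructor
  · rintro ⟨h1, h⟩
    exact ⟨h1, fun i hi hiM γ hγ => by linarith [(h γ hγ).2 i hi hiM]⟩
  · rintro ⟨h1, h⟩
    refine ⟨h1, fun γ hγ => ⟨?_, fun i hi hiM => by linarith [h i hi hiM γ hγ]⟩⟩
    linarith [hFun_pos hM0 (Sset_subset_Ioo d hβ hγ)]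

end Psi

section Minimizer

variable {d M : ℕ} {β t : ℝ}

lemma shoot_mem_UM (hβ : 0 < β) (hM : M ≠ 0) (ht0 : 0 < t)
    (ht : shoot (phiFun d β M) t M = 1) : shoot (phiFun d β M) t ∈ UM M := by
  have hmono : Monotone (shoot (phiFun d β M) t) :=
    (strictMono_shoot (strictMono_phiFun d hβ hM) (phiFun_zero_nonneg d hβ hM) ht0).monotone
  exact ⟨ht0.le, (hmono M.pred_le).trans_eq ht, fun i _ _ => hmono i.le_succ⟩

lemma psiFun_shoot_le (hβ : 0 < β) (hM : 2 ≤ M) (ht : shoot (phiFun d β M) t M = 1) :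
    psiFun d β M (shoot (phiFun d β M) t) ≤ t := by
  rw [psiFun_le_iff_isSubsolution d hβ hM, ← ht, update_eq_self]
  exact isSubsolution_shoot _ t M

lemma le_psiFun_of_shoot_eq_one (hβ : 0 < β) (hM : 2 ≤ M) (ht : shoot (phiFun d β M) t M = 1)
    (v : ℕ → ℝ) : t ≤ psiFun d β M v := by
  have hφ : Monotone (phiFun d β M) := (strictMono_phiFun d hβ (by lia)).monotone
  have hsub := (psiFun_le_iff_isSubsolution d hβ hM).1 (le_refl (psiFun d β M v))
  have hle := hsub.le_shoot hφ (show 1 ≤ M by lia) le_rfl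
  rw [update_self, ← ht] at hle
  exact (strictMono_shoot_left hφ (by lia)).le_iff_le.1 hle

lemma psiFun_shoot (hβ : 0 < β) (hM : 2 ≤ M) (ht : shoot (phiFun d β M) t M = 1) :
    psiFun d β M (shoot (phiFun d β M) t) = t :=
  (psiFun_shoot_le hβ hM ht).antisymm (le_psiFun_of_shoot_eq_one hβ hM ht _)

lemma psiStar_eq_of_shoot_eq_one (hβ : 0 < β) (hM : 2 ≤ M) (ht0 : 0 < t)
    (ht : shoot (phiFun d β M) t M = 1) : psiStar d β M = t := by
  refine IsLeast.csInf_eq ⟨⟨_, shoot_mem_UM hβ (by lia) ht0 ht, psiFun_shoot hβ hM ht⟩, ?_⟩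
  exact forall_mem_image.2 fun v _ => le_psiFun_of_shoot_eq_one hβ hM ht v

lemma eq_shoot_of_psiFun_le (hβ : 0 < β) (hM : 2 ≤ M) (ht : shoot (phiFun d β M) t M = 1)
    {v : ℕ → ℝ} (hv : psiFun d β M v ≤ t) {i : ℕ} (hi : 1 ≤ i) (hiM : i < M) :
    v i = shoot (phiFun d β M) t i := by
  have heq := ((psiFun_le_iff_isSubsolution d hβ hM).1 hv).eq_shoot
    (strictMono_phiFun d hβ (by lia)) (by rw [update_self, ht]) hi hiM.le
  rwa [update_of_ne hiM.ne] at heq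

end Minimizer

section OptSystem

variable {d M : ℕ} {β t : ℝ} {w : ℕ → ℝ}

lemma SolvesOptSystem.eq_shoot (hw : SolvesOptSystem d β M w) {i : ℕ} (hi : i ≤ M) :
    w i = shoot (phiFun d β M) (w 1) i := by
  obtain ⟨h0, -, -, -, -, hrec⟩ := hw
  exact eq_shoot_of_recursion h0 (fun j hj hjM => hrec (j + 1) (by lia) hjM) hi

lemma solvesOptSystem_of_eq_shoot (hβ : 0 < β) (hM : M ≠ 0) (ht0 : 0 < t)
    (ht : shoot (phiFun d β M) t M = 1) (hw : ∀ i ≤ M, w i = shoot (phiFun d β M) t i) :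
    SolvesOptSystem d β M w := by
  have hmono : StrictMono (shoot (phiFun d β M) t) :=
    strictMono_shoot (strictMono_phiFun d hβ hM) (phiFun_zero_nonneg d hβ hM) ht0
  have hw1 : w 1 = t := hw 1 (by lia)
  refine ⟨hw 0 (by lia), (hw M le_rfl).trans ht, hw1 ▸ ht0, ?_, fun i _ hi => ?_,
    fun i hi hiM => ?_⟩
  · rw [hw (M - 1) (by lia), ← ht]
    exact hmono (by lia)
  · rw [hw i (by lia), hw (i + 1) (by lia)]
    exact hmono i.lt_succ_self
  · obtain ⟨j, rfl⟩ := Nat.exists_eq_add_of_le' hi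
    rw [hw1, hw _ hiM, hw (j + 2 - 1) (by lia)]
    exact shoot_succ _ t (by lia)

lemma solvesOptSystem_iff_eq_shoot (hβ : 0 < β) (hM : M ≠ 0) (ht0 : 0 < t)
    (ht : shoot (phiFun d β M) t M = 1) :
    SolvesOptSystem d β M w ↔ ∀ i ≤ M, w i = shoot (phiFun d β M) t i := by
  refine ⟨fun hw => ?_, solvesOptSystem_of_eq_shoot hβ hM ht0 ht⟩
  have hwM : shoot (phiFun d β M) (w 1) M = shoot (phiFun d β M) t M := by
    rw [← hw.eq_shoot le_rfl, ht]
    exact hw.2.1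
  have hw1 : w 1 = t := (strictMono_shoot_left (strictMono_phiFun d hβ hM).monotone
    (Nat.one_le_iff_ne_zero.2 hM)).injective hwM
  exact fun i hi => hw1 ▸ hw.eq_shoot hi

end OptSystem

theorem stmt4_general (d : ℕ) (β : ℝ) (hβ : 0 < β) (M : ℕ) (hM : 2 ≤ M) :
    ∃ u : ℕ → ℝ, u ∈ UM M ∧ psiFun d β M u = psiStar d β M ∧
      (∀ v : ℕ → ℝ, psiFun d β M v ≤ psiStar d β M →
        ∀ i, 1 ≤ i → i ≤ M - 1 → v i = u i) ∧
      ∀ uext : ℕ → ℝ,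
        (uext 0 = 0 ∧ uext M = 1 ∧ ∀ i, 1 ≤ i → i ≤ M - 1 → uext i = u i) →
        SolvesOptSystem d β M uext ∧
          ∀ w : ℕ → ℝ, SolvesOptSystem d β M w → ∀ i ≤ M, w i = uext i := by
  have hM0 : M ≠ 0 := by lia
  obtain ⟨t, ht0, ht⟩ := exists_shoot_phiFun_eq_one d hβ hM0
  have hstar : psiStar d β M = t := psiStar_eq_of_shoot_eq_one hβ hM ht0 ht
  refine ⟨shoot (phiFun d β M) t, shoot_mem_UM hβ hM0 ht0 ht,
    (psiFun_shoot hβ hM ht).trans hstar.symm, fun v hv i hi hiM => ?_, ?_⟩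
  · exact eq_shoot_of_psiFun_le hβ hM ht (hv.trans_eq hstar) hi (by lia)
  · rintro uext ⟨h0, h1, hmid⟩
    have hu : ∀ i ≤ M, uext i = shoot (phiFun d β M) t i := by
      intro i hi
      rcases i.eq_zero_or_pos with rfl | hpos
      · exact h0
      · rcases hi.eq_or_lt with rfl | hlt
        · exact h1.trans ht.symm
        · exact hmid i hpos (by lia)
    refine ⟨(solvesOptSystem_iff_eq_shoot hβ hM0 ht0 ht).2 hu, fun w hw i hi => ?_⟩
    exact ((solvesOptSystem_iff_eq_shoot hβ hM0 ht0 ht).1 hw i hi).trans (hu i hi).symm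

theorem stmt4 (d : ℕ) (hd : 1 ≤ d) (β : ℝ) (hβ : 0 < β) (M : ℕ) (hM2 : 2 ≤ M) :
    ∃ u : ℕ → ℝ, u ∈ UM M ∧ psiFun d β M u = psiStar d β M ∧
      (∀ v ∈ UM M, psiFun d β M v = psiStar d β M →
        ∀ i, 1 ≤ i → i ≤ M - 1 → v i = u i) ∧
      ∀ uext : ℕ → ℝ,
        (uext 0 = 0 ∧ uext M = 1 ∧ ∀ i, 1 ≤ i → i ≤ M - 1 → uext i = u i) →
        SolvesOptSystem d β M uext ∧
          ∀ w : ℕ → ℝ, SolvesOptSystem d β M w → ∀ i ≤ M, w i = uext i := by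
  obtain ⟨u, huU, hu, huniq, hopt⟩ := stmt4_general d β hβ M hM2
  exact ⟨u, huU, hu, fun v _ hv => huniq v hv.le, hopt⟩
end

section
/- Let M ≥ 2 be an integer and let (u_0, u_1, …, u_M) solve the optimality system. Then u_1 ≤ (M+1)·γ_max^{M−1}/(1−γ_max)². -/
/-- S_n(a) = Σ_{k=0}^{n−1} a^{−k}. -/
noncomputable def Sgeo (n : ℕ) (a : ℝ) : ℝ := ∑ k ∈ Finset.range n, a⁻¹ ^ k

/-!
Each `γ ∈ 𝒮` has `h_M(γ) ≥ 1 - γ`, so `x ↦ γ x + h_M(γ)` lies above the line of slope `γ` through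
`(1, 1)`. Hence `φ_M ≥ 1` on `[1, ∞)` and `φ_M(x) ≥ 1 - γ_max (1 - x)` for `x ≤ 1`. Suppose
`u_1 > 0`. By the first bound, a value `u_i > 1` would force every later value above `1`, against
`u_M = 1`; so the second bound applies along the whole sequence and says that
`w_i = 1 - u_i + u_1` satisfies `w_{i+1} ≤ γ_max w_i`. As `w_1 = 1` and `w_M = u_1`, this gives
`u_1 ≤ γ_max ^ (M - 1)`.
-/

section Recursion

lemma le_of_pos_add_le_succ {α : Type*} [AddZeroClass α] [LinearOrder α] [AddRightStrictMono α]
    {f : α → α} {v : ℕ → α} {a c : α} {n : ℕ} (hc : 0 < c) (hf : ∀ x, a ≤ x → a ≤ f x)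
    (hv : ∀ k < n, c + f (v k) ≤ v (k + 1)) (hn : v n ≤ a) {k : ℕ} (hk : k ≤ n) : v k ≤ a := by
  induction hk using Nat.decreasingInduction with
  | self => exact hn
  | of_succ k hk ih =>
    by_contra! hlt
    exact ih.not_gt <| calc
      a ≤ f (v k) := hf _ hlt.le
      _ < c + f (v k) := lt_add_of_pos_left _ hc
      _ ≤ v (k + 1) := hv k hk

lemma initial_le_pow_of_add_le_succ {f : ℝ → ℝ} {v : ℕ → ℝ} {g : ℝ} {n : ℕ} (hg : 0 ≤ g)
    (hf_ge : ∀ x, 1 ≤ x → 1 ≤ f x) (hf_le : ∀ x ≤ 1, 1 - g * (1 - x) ≤ f x)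
    (hv : ∀ k < n, v 0 + f (v k) ≤ v (k + 1)) (hn : v n ≤ 1) : v 0 ≤ g ^ n := by
  rcases le_or_gt (v 0) 0 with h0 | h0
  · exact h0.trans (pow_nonneg hg n)
  have contraction : ∀ k < n, 1 - v (k + 1) + v 0 ≤ g * (1 - v k + v 0) := fun k hk => by
    have hvk : v k ≤ 1 := le_of_pos_add_le_succ h0 hf_ge hv hn hk.le
    linarith [hf_le _ hvk, hv k hk, mul_nonneg hg h0.le]
  calc v 0 ≤ 1 - v n + v 0 := by linarith
    _ ≤ g ^ n * (1 - v 0 + v 0) := le_geom (u := fun k => 1 - v k + v 0) hg n contraction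
    _ = g ^ n := by ring

end Recursion

lemma one_sub_le_hFun {M : ℕ} (hM : M ≠ 0) {γ : ℝ} (h0 : 0 ≤ γ) (h1 : γ < 1) :
    1 - γ ≤ hFun M γ :=
  le_div_self (sub_nonneg.2 h1.le) (sub_pos.2 (pow_lt_one₀ h0 h1 hM))
    (sub_le_self 1 (pow_nonneg h0 M))

section Parameters

variable {d : ℕ} {β : ℝ}

lemma gammaMin_nonneg (hβ : 0 ≤ β) : 0 ≤ gammaMin d β := by
  unfold gammaMin
  positivity

lemma gammaMin_le_gammaMax (hβ : 0 ≤ β) : gammaMin d β ≤ gammaMax d β :=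
  div_le_div_of_nonneg_right (le_add_of_nonneg_right d.cast_nonneg) (by positivity)

lemma gammaMax_nonneg (hβ : 0 ≤ β) : 0 ≤ gammaMax d β :=
  (gammaMin_nonneg hβ).trans (gammaMin_le_gammaMax hβ)

lemma gammaMax_lt_one (hβ : 0 < β) : gammaMax d β < 1 := by
  unfold gammaMax
  rw [div_lt_one (by positivity)]
  linarith

lemma le_phiFun (hβ : 0 ≤ β) {M : ℕ} {a x : ℝ} (h : ∀ γ ∈ Sset d β, a ≤ γ * x + hFun M γ) :
    a ≤ phiFun d β M x :=
  le_csInf ((Set.nonempty_Icc.2 (gammaMin_le_gammaMax hβ)).image _) (Set.forall_mem_image.2 h)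

variable {M : ℕ}

lemma one_sub_mul_le_of_mem_Sset (hβ : 0 < β) (hM : M ≠ 0) {γ : ℝ} (hγ : γ ∈ Sset d β)
    (x : ℝ) : 1 - γ * (1 - x) ≤ γ * x + hFun M γ := by
  linarith [one_sub_le_hFun hM ((gammaMin_nonneg hβ.le).trans hγ.1)
    (hγ.2.trans_lt (gammaMax_lt_one hβ))]

lemma one_le_phiFun (hβ : 0 < β) (hM : M ≠ 0) {x : ℝ} (hx : 1 ≤ x) : 1 ≤ phiFun d β M x :=
  le_phiFun hβ.le fun γ hγ => by
    have hγ0 : 0 ≤ γ := (gammaMin_nonneg hβ.le).trans hγ.1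
    calc 1 ≤ 1 - γ * (1 - x) := by linarith [mul_nonneg hγ0 (sub_nonneg.2 hx)]
      _ ≤ γ * x + hFun M γ := one_sub_mul_le_of_mem_Sset hβ hM hγ x

lemma one_sub_gammaMax_mul_le_phiFun (hβ : 0 < β) (hM : M ≠ 0) {x : ℝ} (hx : x ≤ 1) :
    1 - gammaMax d β * (1 - x) ≤ phiFun d β M x :=
  le_phiFun hβ.le fun γ hγ =>
    calc 1 - gammaMax d β * (1 - x) ≤ 1 - γ * (1 - x) :=
          sub_le_sub_left (mul_le_mul_of_nonneg_right hγ.2 (sub_nonneg.2 hx)) 1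
      _ ≤ γ * x + hFun M γ := one_sub_mul_le_of_mem_Sset hβ hM hγ x

end Parameters

lemma pow_le_mul_pow_div_sq {g : ℝ} (h0 : 0 ≤ g) (h1 : g < 1) {c : ℝ} (hc : 1 ≤ c) (n : ℕ) :
    g ^ n ≤ c * g ^ n / (1 - g) ^ 2 :=
  calc g ^ n ≤ c * g ^ n := le_mul_of_one_le_left (pow_nonneg h0 n) hc
    _ ≤ c * g ^ n / (1 - g) ^ 2 :=
      le_div_self (by positivity) (pow_pos (sub_pos.2 h1) 2)
        (pow_le_one₀ (sub_nonneg.2 h1.le) (sub_le_self 1 h0))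

theorem stmt8_general {d : ℕ} {β : ℝ} (hβ : 0 < β) {M : ℕ} (hM : M ≠ 0) {u : ℕ → ℝ}
    (hrec : ∀ i, 1 ≤ i → i < M → u 1 + phiFun d β M (u i) ≤ u (i + 1)) (huM : u M ≤ 1) :
    u 1 ≤ gammaMax d β ^ (M - 1) :=
  initial_le_pow_of_add_le_succ (v := fun k => u (k + 1)) (gammaMax_nonneg hβ.le)
    (fun _ => one_le_phiFun hβ hM) (fun _ => one_sub_gammaMax_mul_le_phiFun hβ hM)
    (fun k _ => hrec (k + 1) (by omega) (by omega))
    (by simpa only [Nat.sub_add_cancel (Nat.pos_of_ne_zero hM)] using huM)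

theorem stmt8 (d : ℕ) (hd : 1 ≤ d) (β : ℝ) (hβ : 0 < β) (M : ℕ) (hM2 : 2 ≤ M)
    (u : ℕ → ℝ) (hsol : SolvesOptSystem d β M u) :
    u 1 ≤ (M + 1) * gammaMax d β ^ (M - 1) / (1 - gammaMax d β) ^ 2 := by
  obtain ⟨-, huM, -, -, -, hrec⟩ := hsol
  have hpow : u 1 ≤ gammaMax d β ^ (M - 1) := stmt8_general hβ (by omega)
    (fun i _ _ => (hrec (i + 1) (by omega) (by omega)).ge) huM.le
  exact hpow.trans (pow_le_mul_pow_div_sq (gammaMax_nonneg hβ.le) (gammaMax_lt_one hβ)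
    (le_add_of_nonneg_left M.cast_nonneg) _)
end
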